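/- Let L be a Lie algebra over k. If L contains a Lie subalgebra L' that is either infinite dimensional and abelian, or isomorphic as a Lie algebra to the positive Witt algebra W₊, then U(L) is not noetherian (neither left nor right). -/

import Mathlib

/-!
Statement 14: If a Lie algebra L over a field k of characteristic 0 contains a Lie
subalgebra L' that is either infinite dimensional and abelian, or isomorphic (as a Lie
algebra) to the positive Witt algebra W₊, then U(L) is neither left nor right noetherian.
-/

noncomputable section

open Polynomial

/-- The derivation `e n = x^(n+1) d/dx` of `k[x]`. -/
def wittGen (k : Type*) [Field k] (n : ℕ) : Derivation k k[X] k[X] :=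
  (X : k[X]) ^ (n + 1) • Polynomial.derivative'

/-- The positive Witt algebra `W₊`. -/
def positiveWitt (k : Type*) [Field k] : LieSubalgebra k (Derivation k k[X] k[X]) :=
  LieSubalgebra.lieSpan k _ {d | ∃ n : ℕ, 1 ≤ n ∧ d = wittGen k n}

/-- A basis `y` of a complement of the Lie subalgebra `L'`, recorded with the projection `proj`
onto `L'` and the coordinates `coord` with respect to `y`. -/
structure ComplementBasis {k L : Type*} [Field k] [LieRing L] [LieAlgebra k L]
    (L' : LieSubalgebra k L) (I : Type*) where
  /-- The coordinates with respect to `y`. -/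
  coord : L →ₗ[k] I →₀ k
  /-- The basis of the complement. -/
  y : I → L
  /-- The projection onto `L'` along the span of the `y i`. -/
  proj : L →ₗ[k] L'
  proj_coe (x : L') : proj x = x
  proj_y (i : I) : proj (y i) = 0
  coord_coe (x : L') : coord x = 0
  coord_y (i : I) : coord (y i) = Finsupp.single i 1
  decomp (x : L) : x = proj x + Finsupp.linearCombination k y (coord x)

namespace ComplementBasis

open Finsupp

section

variable {k L : Type*} [Field k] [LieRing L] [LieAlgebra k L] {L' : LieSubalgebra k L}

theorem exists_complementBasis (L' : LieSubalgebra k L) :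
    ∃ I : Set L, Nonempty (ComplementBasis L' I) := by
  obtain ⟨C, hC⟩ := L'.toSubmodule.exists_isCompl
  let b := Module.Basis.ofVectorSpace k C
  refine ⟨Subtype.val '' Module.Basis.ofVectorSpaceIndex k C, ⟨?_⟩⟩
  let e : Module.Basis.ofVectorSpaceIndex k C ≃
      (Subtype.val '' Module.Basis.ofVectorSpaceIndex k C : Set L) :=
    Equiv.Set.image _ _ Subtype.val_injective
  let b' := b.reindex e
  exact
    { proj := L'.toSubmodule.projectionOnto C hC
      coord := b'.repr.toLinearMap ∘ₗ C.projectionOnto L'.toSubmodule hC.symm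
      y := fun i => b' i
      proj_coe := fun x => Submodule.projectionOnto_apply_left hC x
      proj_y := fun i => Submodule.projectionOnto_apply_right hC _
      coord_coe := fun x => by
        have h : C.projectionOnto L'.toSubmodule hC.symm (x : L) = 0 :=
          Submodule.projectionOnto_apply_right hC.symm x
        simp [h]
      coord_y := fun i => by
        have h : C.projectionOnto L'.toSubmodule hC.symm (b' i : L) = b' i :=
          Submodule.projectionOnto_apply_left hC.symm _
        simp [h]
      decomp := fun x => by
        have h : linearCombination k (fun i => (b' i : L))
            (b'.repr (C.projectionOnto L'.toSubmodule hC.symm x)) =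
            C.projectionOnto L'.toSubmodule hC.symm x := by
          have := congrArg C.subtype
            (b'.linearCombination_repr (C.projectionOnto L'.toSubmodule hC.symm x))
          rw [Finsupp.apply_linearCombination] at this
          exact this
        have h2 := Submodule.projection_add_projection_eq_self hC x
        simp only [LinearMap.comp_apply, LinearEquiv.coe_coe]
        rw [h]
        exact h2.symm }

end

variable {k L N I : Type*} [Field k] [LieRing L] [LieAlgebra k L] {L' : LieSubalgebra k L}
  [AddCommGroup N] [Module k N] (B : ComplementBasis L' I)

theorem ext_of_coe_of_y {M : Type*} [AddCommGroup M] [Module k M] {f g : L →ₗ[k] M}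
    (h₁ : ∀ x : L', f x = g x) (h₂ : ∀ i, f (B.y i) = g (B.y i)) : f = g := by
  ext x
  rw [B.decomp x, map_add, map_add, h₁, Finsupp.apply_linearCombination,
    Finsupp.apply_linearCombination]
  congr 2
  ext i
  simp [h₂]

variable (N) in
/-- The leading part of the action: multiplication by the component along the complement. -/
def lead : L →ₗ[k] (Multiset I →₀ N) →ₗ[k] (Multiset I →₀ N) :=
  linearCombination k (fun i => lmapDomain N k (i ::ₘ ·)) ∘ₗ B.coord

theorem lead_coe (x : L') : B.lead N x = 0 := by
  simp [lead, B.coord_coe]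

theorem lead_y (i : I) (T : Multiset I) (n : N) :
    B.lead N (B.y i) (single T n) = single (i ::ₘ T) n := by
  simp [lead, B.coord_y]

variable (k N I) in
/-- The span of the multisets of cardinality at most `d`. -/
def degLE (d : ℕ) : Submodule k (Multiset I →₀ N) := supported N k {T | Multiset.card T ≤ d}

theorem single_mem_degLE {d : ℕ} {T : Multiset I} (h : Multiset.card T ≤ d) (n : N) :
    single T n ∈ degLE k N I d :=
  single_mem_supported k n h

theorem degLE_induction {d : ℕ} {W : Submodule k (Multiset I →₀ N)}
    (h : ∀ T, Multiset.card T ≤ d → ∀ n, single T n ∈ W) : degLE k N I d ≤ W := by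
  intro v hv
  rw [← sum_single v]
  exact Submodule.sum_mem _ fun T hT => h T (hv hT) _

theorem degLE_mono {d e : ℕ} (h : d ≤ e) : degLE k N I d ≤ degLE k N I e :=
  degLE_induction fun _ hT _ => single_mem_degLE (hT.trans h) _

theorem lead_mem_degLE {d : ℕ} {v : Multiset I →₀ N} (hv : v ∈ degLE k N I d) (x : L) :
    B.lead N x v ∈ degLE k N I (d + 1) := by
  suffices h : degLE k N I d ≤ (degLE k N I (d + 1)).comap (B.lead N x) from h hv
  refine degLE_induction fun T hT n => ?_
  simp only [lead, LinearMap.comp_apply, linearCombination_apply, Submodule.mem_comap,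
    Finsupp.sum, LinearMap.sum_apply, LinearMap.smul_apply, lmapDomain_apply, mapDomain_single]
  exact Submodule.sum_mem _ fun i _ => Submodule.smul_mem _ _ (single_mem_degLE (by simpa) _)

variable [LinearOrder I]

theorem exists_min_of_ne_zero {T : Multiset I} (h : T ≠ 0) : ∃ j ∈ T, ∀ i ∈ T, j ≤ i := by
  induction T using Multiset.induction with
  | empty => exact absurd rfl h
  | cons a T ih =>
    by_cases hT : T = 0
    · exact ⟨a, by simp [hT]⟩
    · obtain ⟨j, hj, hmin⟩ := ih hT
      rcases le_total a j with haj | hja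
      · refine ⟨a, by simp, fun i hi => ?_⟩
        rcases Multiset.mem_cons.1 hi with rfl | hi
        exacts [le_rfl, haj.trans (hmin i hi)]
      · refine ⟨j, by simp [hj], fun i hi => ?_⟩
        rcases Multiset.mem_cons.1 hi with rfl | hi
        exacts [hja, hmin i hi]

theorem eq_zero_or_exists_cons (T : Multiset I) :
    T = 0 ∨ ∃ j T', T = j ::ₘ T' ∧ ∀ i ∈ T', j ≤ i := by
  by_cases h : T = 0
  · exact Or.inl h
  · obtain ⟨j, hj, hmin⟩ := exists_min_of_ne_zero h
    exact Or.inr ⟨j, T.erase j, (Multiset.cons_erase hj).symm,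
      fun i hi => hmin i (Multiset.mem_of_mem_erase hi)⟩

/-- The least element of a nonempty multiset. -/
def least (T : Multiset I) (h : T ≠ 0) : I := (exists_min_of_ne_zero h).choose

theorem least_cons {j : I} {T : Multiset I} (h : ∀ i ∈ T, j ≤ i) :
    least (j ::ₘ T) (Multiset.cons_ne_zero) = j := by
  obtain ⟨h₁, h₂⟩ := (exists_min_of_ne_zero (Multiset.cons_ne_zero (a := j) (m := T))).choose_spec
  refine le_antisymm (h₂ j (by simp)) ?_
  rcases Multiset.mem_cons.1 h₁ with h₁ | h₁
  exacts [h₁.ge, h _ h₁]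

/-- The truncation killing the `y i` with `i ≤ j` and fixing the other basis elements and `L'`. -/
def above (j : I) : L →ₗ[k] L :=
  L'.toSubmodule.subtype ∘ₗ B.proj +
    linearCombination k (fun i => if i ≤ j then 0 else B.y i) ∘ₗ B.coord

theorem above_coe (j : I) (x : L') : B.above j x = x := by
  simp [above, B.proj_coe, B.coord_coe]

theorem above_y_of_le {i j : I} (h : i ≤ j) : B.above j (B.y i) = 0 := by
  simp [above, B.proj_y, B.coord_y, h]

theorem above_y_of_lt {i j : I} (h : j < i) : B.above j (B.y i) = B.y i := by
  simp [above, B.proj_y, B.coord_y, h.not_ge]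

variable (ρ : L' →ₗ[k] Module.End k N)

/-- The lower order part of the action on the multiset `T`, computed from an action `A` that is
correct on smaller multisets. -/
def lower (A : L →ₗ[k] (Multiset I →₀ N) →ₗ[k] (Multiset I →₀ N)) (T : Multiset I) :
    L →ₗ[k] N →ₗ[k] (Multiset I →₀ N) :=
  if h : T = 0 then
    LinearMap.mk₂ k (fun x n => single 0 (ρ (B.proj x) n)) (by simp) (by simp) (by simp) (by simp)
  else
    LinearMap.mk₂ k
      (fun x n =>
        A (B.y (least T h)) ((A - B.lead N) (B.above (least T h) x)
          (single (T.erase (least T h)) n)) +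
        A ⁅B.above (least T h) x, B.y (least T h)⁆ (single (T.erase (least T h)) n))
      (fun x x' n => by simp only [map_add, add_lie, LinearMap.add_apply]; abel)
      (fun c x n => by simp only [map_smul, smul_lie, LinearMap.smul_apply, smul_add])
      (fun x n n' => by simp only [map_add, single_add]; abel)
      (fun c x n => by simp only [map_smul, ← smul_single, smul_add])

theorem lower_zero (A : L →ₗ[k] (Multiset I →₀ N) →ₗ[k] (Multiset I →₀ N)) (x : L) (n : N) :
    B.lower ρ A 0 x n = single 0 (ρ (B.proj x) n) := by
  simp [lower]

theorem lower_cons (A : L →ₗ[k] (Multiset I →₀ N) →ₗ[k] (Multiset I →₀ N)) {j : I}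
    {T : Multiset I} (h : ∀ i ∈ T, j ≤ i) (x : L) (n : N) :
    B.lower ρ A (j ::ₘ T) x n =
      A (B.y j) ((A - B.lead N) (B.above j x) (single T n)) +
        A ⁅B.above j x, B.y j⁆ (single T n) := by
  simp [lower, least_cons h]

/-- The action computed by recursion; the `n`-th approximation is correct on multisets of
cardinality less than `n`. -/
def approx : ℕ → L →ₗ[k] (Multiset I →₀ N) →ₗ[k] (Multiset I →₀ N)
  | 0 => 0
  | n + 1 => B.lead N + (lsum k fun T => (B.lower ρ (approx n) T).flip).flip

theorem approx_succ_single (m : ℕ) (x : L) (T : Multiset I) (n : N) :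
    B.approx ρ (m + 1) x (single T n) =
      B.lead N x (single T n) + B.lower ρ (B.approx ρ m) T x n := by
  simp [approx]

theorem approx_sub_lead_mem {m d : ℕ} (hd : d < m) {v : Multiset I →₀ N}
    (hv : v ∈ degLE k N I d) (x : L) : B.approx ρ m x v - B.lead N x v ∈ degLE k N I d := by
  induction m generalizing d v x with
  | zero => omega
  | succ m ih =>
    suffices h : degLE k N I d ≤ (degLE k N I d).comap (B.approx ρ (m + 1) x - B.lead N x) from
      h hv
    refine degLE_induction fun T hT n => ?_
    simp only [Submodule.mem_comap, LinearMap.sub_apply, approx_succ_single, add_sub_cancel_left]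
    rcases eq_zero_or_exists_cons T with rfl | ⟨j, T, rfl, hj⟩
    · rw [lower_zero]
      exact single_mem_degLE (by simp) _
    · rw [Multiset.card_cons] at hT
      have key : ∀ {v : Multiset I →₀ N}, v ∈ degLE k N I (Multiset.card T) → ∀ z,
          B.approx ρ m z v ∈ degLE k N I d := fun {v} hv z => by
        have h₁ := degLE_mono hT (B.lead_mem_degLE hv z)
        have h₂ := degLE_mono (by omega : _ ≤ d) (ih (by omega) hv z)
        simpa using add_mem h₂ h₁
      rw [B.lower_cons ρ _ hj]
      exact add_mem (key (ih (by omega) (single_mem_degLE le_rfl n) _) _)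
        (key (single_mem_degLE le_rfl n) _)

theorem approx_succ_eq {m d : ℕ} (hd : d < m) {v : Multiset I →₀ N}
    (hv : v ∈ degLE k N I d) (x : L) : B.approx ρ (m + 1) x v = B.approx ρ m x v := by
  induction m generalizing d v x with
  | zero => omega
  | succ m ih =>
    suffices h : degLE k N I d ≤ LinearMap.eqLocus (B.approx ρ (m + 1 + 1) x)
      (B.approx ρ (m + 1) x) from h hv
    refine degLE_induction fun T hT n => ?_
    rw [LinearMap.mem_eqLocus, approx_succ_single, approx_succ_single]
    rcases eq_zero_or_exists_cons T with rfl | ⟨j, T, rfl, hj⟩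
    · rw [lower_zero, lower_zero]
    · rw [Multiset.card_cons] at hT
      have hT' : Multiset.card T < m := by omega
      have hs := single_mem_degLE (k := k) (T := T) le_rfl n
      rw [B.lower_cons ρ _ hj, B.lower_cons ρ _ hj]
      simp only [LinearMap.sub_apply]
      rw [ih hT' hs, ih hT' hs, ih hT' (B.approx_sub_lead_mem ρ hT' hs _)]

theorem approx_eq_of_lt {m m' d : ℕ} (hd : d < m) (hm : m ≤ m') {v : Multiset I →₀ N}
    (hv : v ∈ degLE k N I d) (x : L) : B.approx ρ m' x v = B.approx ρ m x v := by
  induction m', hm using Nat.le_induction with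
  | base => rfl
  | succ e he ih => rw [B.approx_succ_eq ρ (hd.trans_le he) hv, ih]

/-- The action of `L` on the module induced from the representation `ρ` of `L'`, realized on
`Multiset I →₀ N` by means of ordered monomials in the basis of the complement. -/
def act : L →ₗ[k] (Multiset I →₀ N) →ₗ[k] (Multiset I →₀ N) :=
  (lsum k fun T => (B.approx ρ (Multiset.card T + 1)).flip ∘ₗ lsingle T).flip

theorem act_single (x : L) (T : Multiset I) (n : N) :
    B.act ρ x (single T n) = B.approx ρ (Multiset.card T + 1) x (single T n) := by
  simp [act]

theorem act_eq_approx {m d : ℕ} (hd : d < m) {v : Multiset I →₀ N} (hv : v ∈ degLE k N I d)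
    (x : L) : B.act ρ x v = B.approx ρ m x v := by
  suffices h : degLE k N I d ≤ LinearMap.eqLocus (B.act ρ x) (B.approx ρ m x) from h hv
  refine degLE_induction fun T hT n => ?_
  rw [LinearMap.mem_eqLocus, act_single]
  exact (B.approx_eq_of_lt ρ (Nat.lt_succ_self _) (by omega) (single_mem_degLE le_rfl n) x).symm

theorem act_sub_lead_mem {d : ℕ} {v : Multiset I →₀ N} (hv : v ∈ degLE k N I d) (x : L) :
    B.act ρ x v - B.lead N x v ∈ degLE k N I d := by
  rw [B.act_eq_approx ρ (Nat.lt_succ_self d) hv]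
  exact B.approx_sub_lead_mem ρ (Nat.lt_succ_self d) hv x

theorem act_single_zero (x : L) (n : N) :
    B.act ρ x (single 0 n) = B.lead N x (single 0 n) + single 0 (ρ (B.proj x) n) := by
  rw [act_single, approx_succ_single, lower_zero]

theorem act_coe_single_zero (x : L') (n : N) :
    B.act ρ x (single 0 n) = single 0 (ρ x n) := by
  rw [act_single_zero, lead_coe, B.proj_coe]
  simp

theorem act_single_cons {j : I} {T : Multiset I} (h : ∀ i ∈ T, j ≤ i) (x : L) (n : N) :
    B.act ρ x (single (j ::ₘ T) n) = B.lead N x (single (j ::ₘ T) n) +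
      B.act ρ (B.y j) (B.act ρ (B.above j x) (single T n) - B.lead N (B.above j x) (single T n)) +
      B.act ρ ⁅B.above j x, B.y j⁆ (single T n) := by
  have hlt : Multiset.card T < Multiset.card (j ::ₘ T) := by simp
  have hs := single_mem_degLE (k := k) (T := T) le_rfl n
  rw [act_single, approx_succ_single, B.lower_cons ρ _ h, B.act_eq_approx ρ hlt hs,
    B.act_eq_approx ρ hlt (B.approx_sub_lead_mem ρ hlt hs _), B.act_eq_approx ρ hlt hs, add_assoc]
  rfl

theorem act_y_single {j : I} {T : Multiset I} (h : ∀ i ∈ T, j ≤ i) (n : N) :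
    B.act ρ (B.y j) (single T n) = single (j ::ₘ T) n := by
  rcases eq_zero_or_exists_cons T with rfl | ⟨l, T, rfl, hl⟩
  · rw [act_single_zero, lead_y, B.proj_y]
    simp
  · rw [B.act_single_cons ρ hl, B.above_y_of_le (h l (by simp)), lead_y]
    simp

/-- Elements that lie in `L'` or are basis elements `y i` of the complement with `j < i`. -/
def IsAbove (j : I) (x : L) : Prop := x ∈ L' ∨ ∃ i, j < i ∧ x = B.y i

theorem act_act_y_of_isAbove {j : I} {T : Multiset I} (h : ∀ i ∈ T, j ≤ i) {x : L}
    (hx : B.IsAbove j x) (n : N) :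
    B.act ρ x (B.act ρ (B.y j) (single T n)) =
      B.act ρ (B.y j) (B.act ρ x (single T n)) + B.act ρ ⁅x, B.y j⁆ (single T n) := by
  rw [B.act_y_single ρ h, B.act_single_cons ρ h]
  rcases hx with hx | ⟨i, hi, rfl⟩
  · lift x to L' using hx
    simp [B.above_coe, B.lead_coe]
  · have hji : ∀ l ∈ i ::ₘ T, j ≤ l := fun l hl => by
      rcases Multiset.mem_cons.1 hl with rfl | hl
      exacts [hi.le, h l hl]
    rw [B.above_y_of_lt hi, lead_y, lead_y, map_sub, B.act_y_single ρ hji, Multiset.cons_swap]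
    abel

/-- The compatibility of the action with the bracket of `x` and `y` at the vector `v`. -/
def CommutesAt (x y : L) (v : Multiset I →₀ N) : Prop :=
  B.act ρ x (B.act ρ y v) - B.act ρ y (B.act ρ x v) = B.act ρ ⁅x, y⁆ v

variable {B ρ} in
theorem CommutesAt.symm {x y : L} {v : Multiset I →₀ N} (h : B.CommutesAt ρ x y v) :
    B.CommutesAt ρ y x v := by
  rw [CommutesAt, ← lie_skew, map_neg, LinearMap.neg_apply, ← h]
  abel

theorem commutesAt_self (x : L) (v : Multiset I →₀ N) : B.CommutesAt ρ x x v := by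
  simp [CommutesAt]

theorem commutesAt_of_isAbove {j : I} {T : Multiset I} (h : ∀ i ∈ T, j ≤ i) {x : L}
    (hx : B.IsAbove j x) (n : N) : B.CommutesAt ρ x (B.y j) (single T n) := by
  rw [CommutesAt, B.act_act_y_of_isAbove ρ h hx, add_sub_cancel_left]

theorem commutesAt_of_basis {v : Multiset I →₀ N}
    (h₁ : ∀ x y : L', B.CommutesAt ρ x y v)
    (h₂ : ∀ (x : L') i, B.CommutesAt ρ x (B.y i) v)
    (h₃ : ∀ i j, j < i → B.CommutesAt ρ (B.y i) (B.y j) v) (x y : L) : B.CommutesAt ρ x y v := by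
  have h₃' : ∀ i j, B.CommutesAt ρ (B.y i) (B.y j) v := fun i j => by
    rcases lt_trichotomy i j with h | rfl | h
    exacts [(h₃ j i h).symm, B.commutesAt_self ρ _ _, h₃ i j h]
  let f : L →ₗ[k] L →ₗ[k] (Multiset I →₀ N) :=
    LinearMap.mk₂ k (fun x y => B.act ρ x (B.act ρ y v) - B.act ρ y (B.act ρ x v))
      (fun x x' y => by simp only [map_add, LinearMap.add_apply]; abel)
      (fun c x y => by simp only [map_smul, LinearMap.smul_apply, smul_sub])
      (fun x y y' => by simp only [map_add, LinearMap.add_apply]; abel)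
      (fun c x y => by simp only [map_smul, LinearMap.smul_apply, smul_sub])
  let g : L →ₗ[k] L →ₗ[k] (Multiset I →₀ N) :=
    LinearMap.mk₂ k (fun x y => B.act ρ ⁅x, y⁆ v)
      (fun x x' y => by simp only [map_add, LinearMap.add_apply, add_lie])
      (fun c x y => by simp only [map_smul, LinearMap.smul_apply, smul_lie])
      (fun x y y' => by simp only [map_add, LinearMap.add_apply, lie_add])
      (fun c x y => by simp only [map_smul, LinearMap.smul_apply, lie_smul])
  have hfg : f = g :=
    B.ext_of_coe_of_y
      (fun x => B.ext_of_coe_of_y (fun y => h₁ x y) (fun i => h₂ x i))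
      (fun i => B.ext_of_coe_of_y (fun y => (h₂ y i).symm) (fun j => h₃' i j))
  exact LinearMap.congr_fun₂ hfg x y

theorem act_act_act_y_of_isAbove {l : I} {T : Multiset I} (hl : ∀ i ∈ T, l ≤ i)
    (ih : ∀ w ∈ degLE k N I (Multiset.card T), ∀ x y, B.CommutesAt ρ x y w)
    {x y : L} (hx : B.IsAbove l x) (hy : B.IsAbove l y) (n : N) :
    B.act ρ x (B.act ρ y (B.act ρ (B.y l) (single T n))) =
      B.act ρ (B.y l) (B.act ρ x (B.act ρ y (single T n))) +
      B.act ρ ⁅x, B.y l⁆ (B.act ρ y (single T n)) +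
      B.act ρ ⁅y, B.y l⁆ (B.act ρ x (single T n)) + B.act ρ ⁅x, ⁅y, B.y l⁆⁆ (single T n) := by
  have hs := single_mem_degLE (k := k) (T := T) le_rfl n
  have h₁ : B.CommutesAt ρ x (B.y l) (B.lead N y (single T n)) := by
    rcases hy with hy | ⟨i, hi, rfl⟩
    · lift y to L' using hy
      simp [B.lead_coe, CommutesAt]
    · rw [lead_y]
      refine B.commutesAt_of_isAbove ρ (fun m hm => ?_) hx n
      rcases Multiset.mem_cons.1 hm with rfl | hm
      exacts [hi.le, hl m hm]
  have h₂ := ih _ (B.act_sub_lead_mem ρ hs y) x (B.y l)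
  have h₃ := ih _ hs x ⁅y, B.y l⁆
  simp only [CommutesAt, map_sub] at h₁ h₂ h₃
  rw [B.act_act_y_of_isAbove ρ hl hy, map_add, sub_eq_iff_eq_add.1 h₃]
  have h₄ : B.act ρ x (B.act ρ (B.y l) (B.act ρ y (single T n))) =
      B.act ρ (B.y l) (B.act ρ x (B.act ρ y (single T n))) +
      B.act ρ ⁅x, B.y l⁆ (B.act ρ y (single T n)) := by
    rw [← sub_eq_zero] at h₁ h₂ ⊢
    rw [← add_zero (0 : Multiset I →₀ N)]
    nth_rewrite 1 [← h₁]
    rw [← h₂]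
    abel
  rw [h₄]
  abel

theorem commutesAt_of_mem_degLE (hρ : ∀ x y : L', ρ ⁅x, y⁆ = ρ x * ρ y - ρ y * ρ x) (d : ℕ) :
    ∀ v ∈ degLE k N I d, ∀ x y, B.CommutesAt ρ x y v := by
  induction d using Nat.strong_induction_on with
  | _ d ih =>
  intro v hv x y
  suffices h : degLE k N I d ≤ LinearMap.eqLocus
      (B.act ρ x * B.act ρ y - B.act ρ y * B.act ρ x : Module.End k _) (B.act ρ ⁅x, y⁆) from h hv
  refine degLE_induction fun T hT n => ?_
  change B.CommutesAt ρ x y (single T n)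
  rcases eq_zero_or_exists_cons T with rfl | ⟨l, T, rfl, hl⟩
  · refine B.commutesAt_of_basis ρ (fun x y => ?_)
      (fun x i => B.commutesAt_of_isAbove ρ (by simp) (Or.inl x.2) n)
      (fun i j hij => B.commutesAt_of_isAbove ρ (by simp) (Or.inr ⟨i, hij, rfl⟩) n) x y
    rw [CommutesAt, ← LieSubalgebra.coe_bracket]
    simp only [act_coe_single_zero, hρ]
    simp
  · rw [Multiset.card_cons] at hT
    have ih' := ih (Multiset.card T) (by omega)
    have hs := single_mem_degLE (k := k) (T := T) le_rfl n
    have both : ∀ x y, B.IsAbove l x → B.IsAbove l y →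
        B.CommutesAt ρ x y (single (l ::ₘ T) n) := fun x y hx hy => by
      have h₁ := ih' _ hs x y
      have h₂ := ih' _ hs ⁅x, y⁆ (B.y l)
      rw [CommutesAt] at h₁ h₂
      rw [CommutesAt, ← B.act_y_single ρ hl, B.act_act_act_y_of_isAbove ρ hl ih' hx hy,
        B.act_act_act_y_of_isAbove ρ hl ih' hy hx, sub_eq_iff_eq_add.1 h₂, ← h₁, lie_lie,
        map_sub, map_sub, LinearMap.sub_apply]
      abel
    have hle : ∀ {i}, i ≤ l → ∀ m ∈ l ::ₘ T, i ≤ m := fun {i} hi m hm => by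
      rcases Multiset.mem_cons.1 hm with rfl | hm
      exacts [hi, hi.trans (hl m hm)]
    refine B.commutesAt_of_basis ρ (fun x y => both _ _ (Or.inl x.2) (Or.inl y.2))
      (fun x i => ?_) (fun i j hij => ?_) x y
    · rcases le_or_gt i l with hi | hi
      · exact B.commutesAt_of_isAbove ρ (hle hi) (Or.inl x.2) n
      · exact both _ _ (Or.inl x.2) (Or.inr ⟨i, hi, rfl⟩)
    · rcases le_or_gt j l with hj | hj
      · exact B.commutesAt_of_isAbove ρ (hle hj) (Or.inr ⟨i, hij, rfl⟩) n
      · exact both _ _ (Or.inr ⟨i, hj.trans hij, rfl⟩) (Or.inr ⟨j, hj, rfl⟩)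

theorem act_lie (hρ : ∀ x y : L', ρ ⁅x, y⁆ = ρ x * ρ y - ρ y * ρ x) (x y : L) :
    (B.act ρ ⁅x, y⁆ : Module.End k _) = B.act ρ x * B.act ρ y - B.act ρ y * B.act ρ x := by
  ext T n : 2
  exact Eq.symm (B.commutesAt_of_mem_degLE ρ hρ _ _ (single_mem_degLE le_rfl n) x y)

end ComplementBasis

section

attribute [local instance] LieRing.ofAssociativeRing

namespace UniversalEnvelopingAlgebra

variable {k L : Type*} [Field k] [LieRing L] [LieAlgebra k L]

theorem induction_on {P : UniversalEnvelopingAlgebra k L → Prop}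
    (a : UniversalEnvelopingAlgebra k L)
    (algebraMap : ∀ r : k, P (algebraMap k (UniversalEnvelopingAlgebra k L) r))
    (ι : ∀ x : L, P (ι k x))
    (add : ∀ a b, P a → P b → P (a + b)) (mul : ∀ a b, P a → P b → P (a * b)) : P a := by
  obtain ⟨t, rfl⟩ : ∃ t, mkAlgHom k L t = a := RingCon.mkₐ_surjective _ a
  induction t using TensorAlgebra.induction with
  | algebraMap r => rw [AlgHom.commutes]; exact algebraMap r
  | ι x => exact ι x
  | mul a b ha hb => rw [map_mul]; exact mul _ _ ha hb
  | add a b ha hb => rw [map_add]; exact add _ _ ha hb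

/-- Every representation of a Lie subalgebra embeds in the restriction of a representation of the
whole Lie algebra. -/
theorem exists_extension {N : Type*} [AddCommGroup N] [Module k N] (L' : LieSubalgebra k L)
    (ρ : L' →ₗ⁅k⁆ Module.End k N) :
    ∃ (I : Set L) (σ : L →ₗ⁅k⁆ Module.End k (Multiset I →₀ N)) (j : N →ₗ[k] Multiset I →₀ N),
      Function.Injective j ∧ ∀ (x : L') (n : N), σ x (j n) = j (ρ x n) := by
  obtain ⟨I, ⟨B⟩⟩ := ComplementBasis.exists_complementBasis L'
  classical
  let _ : LinearOrder I := linearOrderOfSTO WellOrderingRel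
  have hρ : ∀ x y : L', (ρ : L' →ₗ[k] Module.End k N) ⁅x, y⁆ = ρ x * ρ y - ρ y * ρ x :=
    fun x y => ρ.map_lie x y
  exact ⟨I, { B.act (ρ : L' →ₗ[k] Module.End k N) with
      map_lie' := fun {x y} => B.act_lie _ hρ x y }, Finsupp.lsingle 0,
    Finsupp.single_injective 0, fun x n => B.act_coe_single_zero _ x n⟩

/-- A sequence of elements of the enveloping algebra of a Lie subalgebra, none of which is in the
left ideal generated by the previous ones as witnessed by a representation of the subalgebra,
obstructs the noetherian property for the enveloping algebra of the whole Lie algebra. -/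
theorem not_isNoetherianRing_of_forall_exists {L' : LieSubalgebra k L}
    (p : ℕ → UniversalEnvelopingAlgebra k L') {N : Type*} [AddCommGroup N] [Module k N]
    (h : ∀ n, ∃ (ρ : L' →ₗ⁅k⁆ Module.End k N) (v : N),
      (∀ m < n, lift k ρ (p m) v = 0) ∧ lift k ρ (p n) v ≠ 0) :
    ¬ IsNoetherianRing (UniversalEnvelopingAlgebra k L) := by
  intro hU
  let φ : UniversalEnvelopingAlgebra k L' →ₐ[k] UniversalEnvelopingAlgebra k L :=
    lift k ((ι k).comp L'.incl)
  let J : ℕ →o Ideal (UniversalEnvelopingAlgebra k L) :=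
    ⟨fun n => Ideal.span ((fun m => φ (p m)) '' Set.Iio n),
      fun a b hab => Ideal.span_mono (Set.image_mono (Set.Iio_subset_Iio hab))⟩
  obtain ⟨n, hn⟩ := monotone_stabilizes_iff_noetherian.2 hU J
  have hmem : φ (p n) ∈ J n := by
    rw [hn (n + 1) n.le_succ]
    exact Ideal.subset_span ⟨n, Set.mem_Iio.2 n.lt_succ_self, rfl⟩
  obtain ⟨ρ, v, hv, hne⟩ := h n
  obtain ⟨I, σ, j, hj, hσ⟩ := exists_extension L' ρ
  have hcomp : ∀ (a : UniversalEnvelopingAlgebra k L') (w : N),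
      lift k σ (φ a) (j w) = j (lift k ρ a w) := by
    intro a
    induction a using induction_on with
    | algebraMap r => simp [Algebra.algebraMap_eq_smul_one]
    | ι x =>
      intro w
      have h : φ (ι k x) = ι k (x : L) := lift_ι_apply k _ x
      rw [h, lift_ι_apply, lift_ι_apply, hσ]
    | add a b ha hb => simp [ha, hb]
    | mul a b ha hb => simp [ha, hb]
  have hker : ∀ a ∈ J n, lift k σ a (j v) = 0 := by
    intro a ha
    induction ha using Submodule.span_induction with
    | mem a ha =>
      obtain ⟨m, hm, rfl⟩ := ha
      rw [hcomp, hv m hm, map_zero]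
    | zero => simp
    | add a b _ _ ha hb => simp [ha, hb]
    | smul c a _ ha => simp [ha]
  refine hne (hj ?_)
  rw [← hcomp, hker _ hmem, map_zero]

/-- The antipode of the enveloping algebra. -/
def antipode : UniversalEnvelopingAlgebra k L →ₐ[k] (UniversalEnvelopingAlgebra k L)ᵐᵒᵖ :=
  lift k
    { toFun := fun x => MulOpposite.op (ι k (-x))
      map_add' := fun x y => by simp [add_comm]
      map_smul' := fun c x => by simp
      map_lie' := fun {x y} => by
        apply MulOpposite.unop_injective
        rw [LieRing.of_associative_ring_bracket, MulOpposite.unop_sub, MulOpposite.unop_mul,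
          MulOpposite.unop_mul]
        simp only [MulOpposite.unop_op, map_neg, neg_mul_neg, LieHom.map_lie,
          LieRing.of_associative_ring_bracket, neg_sub] }

theorem antipode_ι (x : L) : antipode (ι k x) = MulOpposite.op (ι k (-x)) :=
  lift_ι_apply k _ x

theorem isNoetherianRing_of_mulOpposite [IsNoetherianRing (UniversalEnvelopingAlgebra k L)ᵐᵒᵖ] :
    IsNoetherianRing (UniversalEnvelopingAlgebra k L) := by
  let S : UniversalEnvelopingAlgebra k L →ₐ[k] (UniversalEnvelopingAlgebra k L)ᵐᵒᵖ := antipode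
  let T : (UniversalEnvelopingAlgebra k L)ᵐᵒᵖ →ₐ[k] UniversalEnvelopingAlgebra k L :=
    (AlgEquiv.opOp k (UniversalEnvelopingAlgebra k L)).symm.toAlgHom.comp (AlgHom.op S)
  have hTS : T.comp S = AlgHom.id k _ := by
    ext x
    change T (S (ι k x)) = ι k x
    simp only [S, antipode_ι]
    change (antipode (ι k (-x))).unop = _
    rw [antipode_ι, neg_neg, MulOpposite.unop_op]
  exact isNoetherianRing_of_surjective _ _ T.toRingHom
    fun a => ⟨S a, AlgHom.congr_fun hTS a⟩

end UniversalEnvelopingAlgebra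

open UniversalEnvelopingAlgebra

theorem exists_character_of_not_finite {k L : Type*} [Field k] [LieRing L] [LieAlgebra k L]
    [IsLieAbelian L] (hL : ¬ Module.Finite k L) :
    ∃ x : ℕ → L, ∀ n, ∃ ρ : L →ₗ⁅k⁆ Module.End k k,
      (∀ m < n, ρ (x m) 1 = 0) ∧ ρ (x n) 1 ≠ 0 := by
  let b := Module.Basis.ofVectorSpace k L
  have : Infinite (Module.Basis.ofVectorSpaceIndex k L) := by
    by_contra h
    rw [not_infinite_iff_finite] at h
    exact hL (Module.Finite.of_basis b)
  let g := Infinite.natEmbedding (Module.Basis.ofVectorSpaceIndex k L)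
  refine ⟨fun n => b (g n), fun n =>
    ⟨{ (b.coord (g n)).smulRight (1 : Module.End k k) with
        map_lie' := fun {x y} => ?_ }, fun m hm => ?_, ?_⟩⟩
  · change b.coord (g n) ⁅x, y⁆ • (1 : Module.End k k) = b.coord (g n) x • 1 * b.coord (g n) y • 1 -
      b.coord (g n) y • 1 * b.coord (g n) x • 1
    rw [trivial_lie_zero, map_zero, zero_smul, smul_mul_smul_comm, smul_mul_smul_comm,
      mul_comm (b.coord (g n) y), sub_self]
  · change (b.coord (g n) (b (g m)) • (1 : Module.End k k)) 1 = 0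
    simp [hm.ne]
  · change (b.coord (g n) (b (g n)) • (1 : Module.End k k)) 1 ≠ 0
    simp

/-- The extension of a trivial one-dimensional module by the module of functions `k[X]` given by
the divergence cocycle `f d/dx ↦ f'`. -/
def divergenceRep (k : Type*) [Field k] :
    Derivation k k[X] k[X] →ₗ⁅k⁆ Module.End k (k[X] × k) where
  toFun D :=
    { toFun := fun v => (D v.1 + v.2 • derivative (D X), 0)
      map_add' := fun v w => by ext1 <;> simp [add_smul]; abel
      map_smul' := fun c v => by simp [mul_smul] }
  map_add' D E := by
    refine LinearMap.ext fun v => Prod.ext ?_ ?_ <;> simp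
    abel
  map_smul' c D := by
    refine LinearMap.ext fun v => ?_
    simp [smul_comm c]
  map_lie' {D E} := by
    have h : ∀ D : Derivation k k[X] k[X], ∃ f, ∀ p, D p = derivative p * f := fun D => by
      refine ⟨D X, fun p => ?_⟩
      rw [← smul_eq_mul, ← Polynomial.mkDerivation_apply]
      exact Derivation.congr_fun (Polynomial.derivation_ext (by simp)) p
    obtain ⟨f, hf⟩ := h D
    obtain ⟨g, hg⟩ := h E
    refine LinearMap.ext fun v => Prod.ext ?_ ?_
    · simp only [LinearMap.coe_mk, AddHom.coe_mk, LieRing.of_associative_ring_bracket,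
        LinearMap.sub_apply, Module.End.mul_apply, Derivation.commutator_apply, map_zero, Prod.fst_sub,
        hf, hg, smul_eq_C_mul, derivative_mul, derivative_add, derivative_sub,
        derivative_C, derivative_X, derivative_one]
      ring
    · simp [LieRing.of_associative_ring_bracket]

theorem divergenceRep_apply {k : Type*} [Field k] (D : Derivation k k[X] k[X]) (v : k[X] × k) :
    divergenceRep k D v = (D v.1 + v.2 • derivative (D X), 0) := rfl

theorem divergenceRep_wittGen {k : Type*} [Field k] (n : ℕ) (v : k[X] × k) :
    divergenceRep k (wittGen k n) v =
      (X ^ (n + 1) * derivative v.1 + v.2 • (C ((n : k) + 1) * X ^ n), 0) := by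
  rw [divergenceRep_apply]
  simp [wittGen, Polynomial.derivative']

theorem divergenceRep_second_difference {k : Type*} [Field k] (m : ℕ) (v : k[X] × k) :
    divergenceRep k (wittGen k 1) (divergenceRep k (wittGen k (m + 3)) v) -
      (2 : k) • divergenceRep k (wittGen k 2) (divergenceRep k (wittGen k (m + 2)) v) +
      divergenceRep k (wittGen k 3) (divergenceRep k (wittGen k (m + 1)) v) =
    ((2 * v.2) • X ^ (m + 4), 0) := by
  refine Prod.ext ?_ (by simp [divergenceRep_wittGen])
  simp only [divergenceRep_wittGen, Prod.fst_add, Prod.fst_sub, Prod.smul_fst, smul_eq_C_mul,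
    derivative_add, derivative_mul, derivative_C, derivative_X_pow, Nat.add_one_sub_one,
    show m + 3 - 1 = m + 2 from rfl, show m + 2 - 1 = m + 1 from rfl, zero_mul]
  simp only [map_zero, map_add, map_mul, map_natCast, map_one, map_ofNat, Nat.cast_add, Nat.cast_one,
    Nat.cast_ofNat]
  ring

/-- The dual of `divergenceRep`. -/
def divergenceDualRep (k : Type*) [Field k] :
    Derivation k k[X] k[X] →ₗ⁅k⁆ Module.End k (Module.Dual k (k[X] × k)) where
  toFun D := -(divergenceRep k D).dualMap
  map_add' D E := by
    rw [map_add]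
    refine LinearMap.ext fun φ => LinearMap.ext fun v => ?_
    simp [add_comm]
  map_smul' c D := by
    rw [map_smul]
    refine LinearMap.ext fun φ => LinearMap.ext fun v => ?_
    simp
  map_lie' {D E} := by
    rw [LieHom.map_lie]
    refine LinearMap.ext fun φ => LinearMap.ext fun v => ?_
    simp [LieRing.of_associative_ring_bracket]

theorem divergenceDualRep_apply {k : Type*} [Field k] (D : Derivation k k[X] k[X])
    (φ : Module.Dual k (k[X] × k)) (v : k[X] × k) :
    divergenceDualRep k D φ v = -φ (divergenceRep k D v) := rfl

/-- The generators of the positive Witt algebra, as elements of it. -/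
def positiveWittGen (k : Type*) [Field k] (n : ℕ) : positiveWitt k :=
  ⟨wittGen k (n + 1), LieSubalgebra.subset_lieSpan ⟨n + 1, by omega, rfl⟩⟩

theorem exists_rep_of_equiv_positiveWitt {k L : Type*} [Field k] [CharZero k] [LieRing L]
    [LieAlgebra k L] (f : L ≃ₗ⁅k⁆ positiveWitt k) :
    ∃ p : ℕ → UniversalEnvelopingAlgebra k L, ∀ n,
      ∃ (ρ : L →ₗ⁅k⁆ Module.End k (Module.Dual k (k[X] × k))) (φ : Module.Dual k (k[X] × k)),
        (∀ m < n, lift k ρ (p m) φ = 0) ∧ lift k ρ (p n) φ ≠ 0 := by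
  let e : ℕ → UniversalEnvelopingAlgebra k L := fun n => ι k (f.symm (positiveWittGen k n))
  let p : ℕ → UniversalEnvelopingAlgebra k L := fun m =>
    e (m + 2) * e 0 - (2 : k) • (e (m + 1) * e 1) + e m * e 2
  let ρ : L →ₗ⁅k⁆ Module.End k (Module.Dual k (k[X] × k)) :=
    (divergenceDualRep k).comp ((positiveWitt k).incl.comp (f : L →ₗ⁅k⁆ positiveWitt k))
  have he : ∀ n φ v, lift k ρ (e n) φ v = -φ (divergenceRep k (wittGen k (n + 1)) v) := by
    intro n φ v
    have h : lift k ρ (e n) = divergenceDualRep k (wittGen k (n + 1)) := by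
      simp only [e, lift_ι_apply]
      simp [ρ, positiveWittGen]
    rw [h, divergenceDualRep_apply]
  have hp : ∀ m φ v, lift k ρ (p m) φ v = φ ((2 * v.2) • X ^ (m + 4), 0) := by
    intro m φ v
    rw [← divergenceRep_second_difference]
    simp [p, he]
  let φ : ℕ → Module.Dual k (k[X] × k) := fun n => lcoeff k (n + 4) ∘ₗ LinearMap.fst k k[X] k
  refine ⟨p, fun n => ⟨ρ, φ n, fun m hm => ?_, fun h => ?_⟩⟩
  · refine LinearMap.ext fun v => ?_
    rw [hp]
    simp [φ, coeff_X_pow, hm.ne']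
  · have := LinearMap.congr_fun h (0, 1)
    rw [hp] at this
    simp [φ] at this

end

theorem enveloping_not_noetherian_of_subalgebra (k : Type*) (L : Type*) [Field k] [CharZero k]
    [LieRing L] [LieAlgebra k L] (L' : LieSubalgebra k L)
    (h : (¬ Module.Finite k L' ∧ IsLieAbelian L') ∨
          Nonempty (L' ≃ₗ⁅k⁆ positiveWitt k)) :
    ¬ IsNoetherianRing (UniversalEnvelopingAlgebra k L) ∧
      ¬ IsNoetherianRing (UniversalEnvelopingAlgebra k L)ᵐᵒᵖ := by
  have hleft : ¬ IsNoetherianRing (UniversalEnvelopingAlgebra k L) := by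
    rcases h with ⟨hfin, hab⟩ | ⟨⟨f⟩⟩
    · obtain ⟨x, hx⟩ := exists_character_of_not_finite hfin
      refine UniversalEnvelopingAlgebra.not_isNoetherianRing_of_forall_exists (N := k)
        (fun n => UniversalEnvelopingAlgebra.ι k (x n)) fun n => ?_
      obtain ⟨ρ, hρ⟩ := hx n
      exact ⟨ρ, 1, by simpa only [UniversalEnvelopingAlgebra.lift_ι_apply] using hρ⟩
    · obtain ⟨p, hp⟩ := exists_rep_of_equiv_positiveWitt f
      exact UniversalEnvelopingAlgebra.not_isNoetherianRing_of_forall_exists p hp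
  exact ⟨hleft, fun _ => hleft UniversalEnvelopingAlgebra.isNoetherianRing_of_mulOpposite⟩

end
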